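/- arXiv:2106.05839 — 5 statements merged into one kernel-verified Lean document; each statement's English description precedes it below -/
import Mathlib

section
/- Let D ≥ 2 and let X₀, X₁ ∈ ℝ^D satisfy (X₀,X₀) > 0 and (X₁,X₁) < 0 with respect to the Minkowski inner product, and set h := (X₀,X₀)(X₁,X₁) − (X₀,X₁)² (so h < 0). Suppose T = A(cosh φ · X₀ + sinh φ · X₁) with A > 0, φ ∈ ℝ, and S = B(sinh ψ · X₀ + cosh ψ · X₁) with B > 0, ψ ∈ ℝ, and that (T,S) = 0 and (T,T) + (S,S) = 0. Then T = (B/√(−h)) · [ −(cosh ψ · (X₁,X₁) + sinh ψ · (X₀,X₁)) · X₀ + (sinh ψ · (X₀,X₀) + cosh ψ · (X₀,X₁)) · X₁ ]. -/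
/-- Minkowski inner product on `ℝ^D`: `(v,w) = v₀w₀ − Σ_{i≥1} vᵢwᵢ`. -/
noncomputable def mink (D : ℕ) (v w : Fin D → ℝ) : ℝ :=
  ∑ i : Fin D, (if i.val = 0 then (1 : ℝ) else -1) * v i * w i

theorem mink_lin (D : ℕ) (X Y : Fin D → ℝ) (p q r s : ℝ) :
    mink D (p • X + q • Y) (r • X + s • Y) =
      p * r * mink D X X + (p * s + q * r) * mink D X Y + q * s * mink D Y Y := by
  unfold mink
  simp only [Finset.mul_sum, ← Finset.sum_add_distrib]
  apply Finset.sum_congr rfl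
  intro i _
  simp only [Pi.add_apply, Pi.smul_apply, smul_eq_mul]
  ring

theorem core (a b c p q r s k : ℝ) (ha : 0 < a) (hc : c < 0)
    (hq1 : q < p) (hq2 : -p < q) (hr1 : r < s) (hr2 : -s < r) (hk : 0 < k)
    (hk2 : k ^ 2 = -(a * c - b ^ 2))
    (ho : p * r * a + (p * s + q * r) * b + q * s * c = 0)
    (hn : (p * p * a + (p * q + q * p) * b + q * q * c) +
      (r * r * a + (r * s + s * r) * b + s * s * c) = 0) :
    k * p = -(s * c + r * b) ∧ k * q = r * a + s * b := by
  have hp : 0 < p := by linarith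
  have hs : 0 < s := by linarith
  obtain ⟨P, hP⟩ : ∃ P, P = -(s * c + r * b) := ⟨_, rfl⟩
  obtain ⟨Q, hQ⟩ : ∃ Q, Q = r * a + s * b := ⟨_, rfl⟩
  rw [← hP, ← hQ]
  have h1 : p * Q = q * P := by rw [hP, hQ]; linarith
  have h2 : a * P + b * Q = s * k ^ 2 := by rw [hP, hQ, hk2]; ring
  have hP0 : P ≠ 0 := by
    intro h0
    have hQ0 : Q = 0 := by
      rw [h0, mul_zero] at h1
      exact (mul_eq_zero.mp h1).resolve_left hp.ne'
    rw [h0, hQ0] at h2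
    have : 0 < s * k ^ 2 := by positivity
    linarith
  obtain ⟨l, hl⟩ : ∃ l, l = p / P := ⟨_, rfl⟩
  have hlp : p = l * P := by rw [hl]; field_simp
  have hlq : q = l * Q := by
    apply mul_right_cancel₀ hP0
    rw [← h1, hlp]; ring
  have hPpos : 0 < P := by
    by_contra hneg
    have hPn : P < 0 := lt_of_le_of_ne (not_lt.mp hneg) hP0
    have hln : l < 0 := by rw [hl]; exact div_neg_of_pos_of_neg hp hPn
    have e1 : P < Q := by
      by_contra hh
      nlinarith [mul_nonneg_of_nonpos_of_nonpos hln.le (sub_nonpos.mpr (not_lt.mp hh))]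
    have e2 : Q < -P := by
      by_contra hh
      have h5 : -P - Q ≤ 0 := by linarith
      nlinarith [mul_nonneg_of_nonpos_of_nonpos hln.le h5]
    have hsc : s * c < 0 := mul_neg_of_pos_of_neg hs hc
    rcases le_total 0 r with hr | hr
    · have hra : 0 ≤ r * a := by positivity
      have hb : b < 0 := by
        by_contra hb
        nlinarith [mul_nonneg (sub_nonneg.mpr hr1.le) (not_lt.mp hb)]
      nlinarith [mul_nonneg hr (neg_nonneg.mpr hb.le)]
    · have hra : r * a ≤ 0 := mul_nonpos_of_nonpos_of_nonneg hr ha.le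
      have hb : 0 < b := by
        by_contra hb
        have h6 : 0 ≤ s + r := by linarith
        nlinarith [mul_nonneg h6 (neg_nonneg.mpr (not_lt.mp hb))]
      nlinarith [mul_nonneg (neg_nonneg.mpr hr) hb.le]
  have hlpos : 0 < l := by rw [hl]; positivity
  have hN : r * Q - s * P ≠ 0 := by
    intro h0
    have h3 : r * q - s * p = 0 := by rw [hlp, hlq]; linear_combination l * h0
    have h4 : 0 < s * p - r * q := by
      nlinarith [mul_pos (sub_pos.mpr hr1) (sub_pos.mpr (neg_lt.mp hq2)), mul_pos (sub_pos.mpr hq1) (sub_pos.mpr (neg_lt.mp hr2)),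
        mul_pos (sub_pos.mpr hr1) (sub_pos.mpr hq1), mul_pos (sub_pos.mpr (neg_lt.mp hr2)) (sub_pos.mpr (neg_lt.mp hq2))]
    linarith
  have hkl : (k * l) ^ 2 = 1 := by
    have h7 : (1 - (k * l) ^ 2) * (r * Q - s * P) = 0 := by
      rw [mul_pow, hk2]
      rw [hlp, hlq] at hn
      rw [hP, hQ] at hn ⊢
      linear_combination hn
    have := (mul_eq_zero.mp h7).resolve_right hN
    linarith
  have hkl1 : k * l = 1 := by
    have h8 : 0 < k * l := by positivity
    exact (pow_eq_one_iff_of_nonneg h8.le two_ne_zero).mp hkl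
  constructor
  · rw [hlp]; linear_combination P * hkl1
  · rw [hlq]; linear_combination Q * hkl1

theorem statement1 (D : ℕ) (hD : 2 ≤ D) (X0 X1 : Fin D → ℝ)
    (hX0 : 0 < mink D X0 X0) (hX1 : mink D X1 X1 < 0)
    (A φ B ψ : ℝ) (hA : 0 < A) (hB : 0 < B)
    (h : ℝ) (hh : h = mink D X0 X0 * mink D X1 X1 - (mink D X0 X1) ^ 2)
    (T S : Fin D → ℝ)
    (hTdef : T = A • (Real.cosh φ • X0 + Real.sinh φ • X1))
    (hSdef : S = B • (Real.sinh ψ • X0 + Real.cosh ψ • X1))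
    (horth : mink D T S = 0) (hnull : mink D T T + mink D S S = 0) :
    T = (B / Real.sqrt (-h)) •
      ((-(Real.cosh ψ * mink D X1 X1 + Real.sinh ψ * mink D X0 X1)) • X0 +
       (Real.sinh ψ * mink D X0 X0 + Real.cosh ψ * mink D X0 X1) • X1) := by
  have hT : T = (A * Real.cosh φ) • X0 + (A * Real.sinh φ) • X1 := by
    rw [hTdef, smul_add, smul_smul, smul_smul]
  have hS : S = (B * Real.sinh ψ) • X0 + (B * Real.cosh ψ) • X1 := by
    rw [hSdef, smul_add, smul_smul, smul_smul]
  have hlt : ∀ x, Real.sinh x < Real.cosh x := Real.sinh_lt_cosh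
  have hlt2 : ∀ x, -Real.cosh x < Real.sinh x := by
    intro x
    have := hlt (-x)
    rw [Real.sinh_neg, Real.cosh_neg] at this
    linarith
  have hneg : 0 < -h := by
    rw [hh]
    nlinarith [mul_pos hX0 (neg_pos.mpr hX1), sq_nonneg (mink D X0 X1)]
  have hk : 0 < Real.sqrt (-h) := Real.sqrt_pos.mpr hneg
  have hk2 : Real.sqrt (-h) ^ 2 = -h := Real.sq_sqrt hneg.le
  rw [hT, hS, mink_lin] at horth
  rw [hT, hS, mink_lin, mink_lin] at hnull
  obtain ⟨e1, e2⟩ := core (mink D X0 X0) (mink D X0 X1) (mink D X1 X1)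
    (A * Real.cosh φ) (A * Real.sinh φ) (B * Real.sinh ψ) (B * Real.cosh ψ) (Real.sqrt (-h))
    hX0 hX1 (mul_lt_mul_of_pos_left (hlt φ) hA)
    (by have := mul_lt_mul_of_pos_left (hlt2 φ) hA; linarith)
    (mul_lt_mul_of_pos_left (hlt ψ) hB)
    (by have := mul_lt_mul_of_pos_left (hlt2 ψ) hB; linarith)
    hk (by rw [hk2, hh]) horth hnull
  rw [hT, smul_add, smul_smul, smul_smul]
  congr 2
  · rw [div_mul_eq_mul_div, eq_div_iff hk.ne']; linear_combination e1
  · rw [div_mul_eq_mul_div, eq_div_iff hk.ne']; linear_combination e2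
end

section
/- Let U ⊆ ℝ² be open, let h be a C¹ Lorentzian metric on U, and let χ : U → ℝ be C² with □_h χ = 0 and ∂χ² := Σ_{α,β} h^{αβ} ∂_αχ ∂_βχ > 0 on U. Define vector fields t, s : U → ℝ² by t^α := (Σ_β h^{αβ} ∂_βχ)/∂χ² and s^α := (Σ_β ε^{αβ} ∂_βχ)/∂χ², where ε^{01} = −1/√(−det h) = −ε^{10}, ε^{00} = ε^{11} = 0. Then t and s commute on U: [t,s]^α := Σ_β (t^β ∂_β s^α − s^β ∂_β t^α) = 0 at every point of U. -/
open Matrix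

/-- Partial derivative `∂_α f` of a real-valued function on `ℝ²`. -/
noncomputable def pd (α : Fin 2) (f : (Fin 2 → ℝ) → ℝ) (x : Fin 2 → ℝ) : ℝ :=
  fderiv ℝ f x (Pi.single α 1)

/-- `∂χ² = Σ_{α,β} h^{αβ} ∂_αχ ∂_βχ` (with `h^{αβ}` the inverse-metric entries). -/
noncomputable def gradSq (h : (Fin 2 → ℝ) → Matrix (Fin 2) (Fin 2) ℝ)
    (χ : (Fin 2 → ℝ) → ℝ) (x : Fin 2 → ℝ) : ℝ :=
  ∑ α, ∑ β, (h x)⁻¹ α β * pd α χ x * pd β χ x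

/-- Wave operator in divergence form: `□_h χ = Σ_α ∂_α(√(−det h) Σ_β h^{αβ} ∂_βχ)`. -/
noncomputable def waveOp (h : (Fin 2 → ℝ) → Matrix (Fin 2) (Fin 2) ℝ)
    (χ : (Fin 2 → ℝ) → ℝ) (x : Fin 2 → ℝ) : ℝ :=
  ∑ α, pd α (fun y => Real.sqrt (-(h y).det) * ∑ β, (h y)⁻¹ α β * pd β χ y) x

/-- The antisymmetric array `ε^{αβ}` with `ε^{01} = −1/√(−det h)`. -/
noncomputable def eps (m : Matrix (Fin 2) (Fin 2) ℝ) : Matrix (Fin 2) (Fin 2) ℝ :=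
  !![0, -1 / Real.sqrt (-m.det); 1 / Real.sqrt (-m.det), 0]

theorem pd_mul' (i : Fin 2) {f g : (Fin 2 → ℝ) → ℝ} {x : Fin 2 → ℝ}
    (hf : DifferentiableAt ℝ f x) (hg : DifferentiableAt ℝ g x) :
    pd i (fun y => f y * g y) x = f x * pd i g x + g x * pd i f x := by
  unfold pd
  rw [fderiv_fun_mul hf hg]
  simp

theorem pd_add' (i : Fin 2) {f g : (Fin 2 → ℝ) → ℝ} {x : Fin 2 → ℝ}
    (hf : DifferentiableAt ℝ f x) (hg : DifferentiableAt ℝ g x) :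
    pd i (fun y => f y + g y) x = pd i f x + pd i g x := by
  unfold pd
  rw [fderiv_fun_add hf hg]
  simp

theorem pd_neg' (i : Fin 2) {f : (Fin 2 → ℝ) → ℝ} {x : Fin 2 → ℝ} :
    pd i (fun y => - f y) x = - pd i f x := by
  unfold pd
  rw [fderiv_fun_neg]
  simp

theorem pd_congr' (i : Fin 2) {f g : (Fin 2 → ℝ) → ℝ} {x : Fin 2 → ℝ}
    (hfg : f =ᶠ[nhds x] g) : pd i f x = pd i g x := by
  unfold pd
  rw [hfg.fderiv_eq]

theorem pd_div' (i : Fin 2) {f g : (Fin 2 → ℝ) → ℝ} {x : Fin 2 → ℝ}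
    (hf : DifferentiableAt ℝ f x) (hg : DifferentiableAt ℝ g x) (h0 : g x ≠ 0) :
    pd i (fun y => f y / g y) x = (pd i f x * g x - f x * pd i g x) / (g x) ^ 2 := by
  have hq : DifferentiableAt ℝ (fun y => f y / g y) x := by fun_prop (disch := assumption)
  have e : pd i f x = pd i (fun y => (f y / g y) * g y) x := by
    apply pd_congr'
    filter_upwards [hg.continuousAt.eventually_ne h0] with y hy
    field_simp
  rw [pd_mul' i hq hg] at e
  rw [e]
  field_simp
  ring

theorem statement3 (U : Set (Fin 2 → ℝ)) (hU : IsOpen U)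
    (h : (Fin 2 → ℝ) → Matrix (Fin 2) (Fin 2) ℝ)
    (hsymm : ∀ x ∈ U, (h x).IsSymm) (hdet : ∀ x ∈ U, (h x).det < 0)
    (hC1 : ∀ α β : Fin 2, ContDiffOn ℝ 1 (fun x => h x α β) U)
    (χ : (Fin 2 → ℝ) → ℝ) (hχ : ContDiffOn ℝ 2 χ U)
    (hwave : ∀ x ∈ U, waveOp h χ x = 0)
    (hpos : ∀ x ∈ U, 0 < gradSq h χ x)
    (t s : (Fin 2 → ℝ) → Fin 2 → ℝ)
    (htdef : ∀ x α, t x α = (∑ β, (h x)⁻¹ α β * pd β χ x) / gradSq h χ x)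
    (hsdef : ∀ x α, s x α = (∑ β, eps (h x) α β * pd β χ x) / gradSq h χ x) :
    ∀ x ∈ U, ∀ α : Fin 2,
      ∑ β, (t x β * pd β (fun y => s y α) x - s x β * pd β (fun y => t y α) x) = 0 := by
  intro x hx
  have hUx : U ∈ nhds x := hU.mem_nhds hx
  have hh : ∀ α β, DifferentiableAt ℝ (fun y => h y α β) x := fun α β =>
    ((hC1 α β).contDiffAt hUx).differentiableAt (by norm_num)
  have hχx : ContDiffAt ℝ 2 χ x := hχ.contDiffAt hUx
  have hfd : DifferentiableAt ℝ (fderiv ℝ χ) x :=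
    (hχx.fderiv_right (m := 1) (by norm_num)).differentiableAt (by norm_num)
  have hpd : ∀ i, DifferentiableAt ℝ (pd i χ) x := fun i => by
    unfold pd
    exact hfd.clm_apply (differentiableAt_const _)
  have hsym2 : pd 0 (pd 1 χ) x = pd 1 (pd 0 χ) x := by
    have hs : IsSymmSndFDerivAt ℝ χ x := hχx.isSymmSndFDerivAt (by simp)
    have key : ∀ i j, pd i (pd j χ) x
        = fderiv ℝ (fderiv ℝ χ) x (Pi.single i 1) (Pi.single j 1) := by
      intro i j
      change fderiv ℝ (fun y => fderiv ℝ χ y (Pi.single j 1)) x (Pi.single i 1) = _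
      rw [fderiv_clm_apply hfd (differentiableAt_const _)]
      simp
    rw [key, key]
    exact hs.eq _ _
  have hdetd : DifferentiableAt ℝ (fun y => (h y).det) x := by
    simp only [Matrix.det_fin_two]
    exact ((hh 0 0).mul (hh 1 1)).sub ((hh 0 1).mul (hh 1 0))
  have hd0 : (h x).det ≠ 0 := (hdet x hx).ne
  have hinv : ∀ α β, DifferentiableAt ℝ (fun y => (h y)⁻¹ α β) x := by
    intro α β
    simp only [Matrix.inv_def, Ring.inverse_eq_inv', Matrix.smul_apply, smul_eq_mul]
    refine (hdetd.inv hd0).mul ?_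
    simp only [Matrix.adjugate_fin_two]
    fin_cases α <;> fin_cases β <;> simp <;> apply hh
  have hw : DifferentiableAt ℝ (fun y => Real.sqrt (-(h y).det)) x :=
    hdetd.neg.sqrt (by simpa using hd0)
  obtain ⟨P, hP⟩ : ∃ P : Fin 2 → (Fin 2 → ℝ) → ℝ, ∀ α, P α =
    fun y => Real.sqrt (-(h y).det) * ∑ β, (h y)⁻¹ α β * pd β χ y := ⟨_, fun _ => rfl⟩
  have hPd : ∀ α, DifferentiableAt ℝ (P α) x := by
    intro α
    rw [hP]
    simp only [Fin.sum_univ_two]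
    exact hw.mul (((hinv α 0).mul (hpd 0)).add ((hinv α 1).mul (hpd 1)))
  have hwv : pd 0 (P 0) x + pd 1 (P 1) x = 0 := by
    have h3 := hwave x hx
    rw [waveOp, Fin.sum_univ_two] at h3
    rw [hP, hP]
    exact h3
  obtain ⟨D, hD⟩ : ∃ D : (Fin 2 → ℝ) → ℝ,
    D = fun y => P 0 y * pd 0 χ y + P 1 y * pd 1 χ y := ⟨_, rfl⟩
  have hDw : ∀ y, D y = Real.sqrt (-(h y).det) * gradSq h χ y := by
    intro y
    simp only [hD, hP, gradSq, Fin.sum_univ_two]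
    ring
  have hwpos : ∀ y ∈ U, 0 < Real.sqrt (-(h y).det) := fun y hy =>
    Real.sqrt_pos.2 (by linarith [hdet y hy])
  have hD0 : D x ≠ 0 := by
    rw [hDw]; exact (mul_pos (hwpos x hx) (hpos x hx)).ne'
  have ht : ∀ α, ∀ y ∈ U, t y α = P α y / D y := by
    intro α y hy
    have h1 := (hwpos y hy).ne'
    have h2 := (hpos y hy).ne'
    rw [htdef, hDw, hP]
    field_simp
  have hs0 : ∀ y ∈ U, s y 0 = (- pd 1 χ y) / D y := by
    intro y hy
    have h1 := (hwpos y hy).ne'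
    have h2 := (hpos y hy).ne'
    rw [hsdef, hDw]
    simp only [eps, Fin.sum_univ_two]
    simp
    field_simp
  have hs1 : ∀ y ∈ U, s y 1 = pd 0 χ y / D y := by
    intro y hy
    have h1 := (hwpos y hy).ne'
    have h2 := (hpos y hy).ne'
    rw [hsdef, hDw]
    simp only [eps, Fin.sum_univ_two]
    simp
    field_simp
  have hDd : DifferentiableAt ℝ D x := by
    rw [hD]
    exact ((hPd 0).mul (hpd 0)).add ((hPd 1).mul (hpd 1))
  have hDi : ∀ i, pd i D x = (P 0 x * pd i (pd 0 χ) x + pd 0 χ x * pd i (P 0) x)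
      + (P 1 x * pd i (pd 1 χ) x + pd 1 χ x * pd i (P 1) x) := by
    intro i
    rw [hD, pd_add' i ((hPd 0).fun_mul (hpd 0)) ((hPd 1).fun_mul (hpd 1)),
      pd_mul' i (hPd 0) (hpd 0), pd_mul' i (hPd 1) (hpd 1)]
  have hti : ∀ i α, pd i (fun y => t y α) x
      = (pd i (P α) x * D x - P α x * pd i D x) / (D x) ^ 2 := by
    intro i α
    rw [← pd_div' i (hPd α) hDd hD0]
    apply pd_congr'
    filter_upwards [hUx] with y hy using ht α y hy
  have hs0i : ∀ i, pd i (fun y => s y 0) x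
      = ((- pd i (pd 1 χ) x) * D x - (- pd 1 χ x) * pd i D x) / (D x) ^ 2 := by
    intro i
    rw [← pd_neg', ← pd_div' i (hpd 1).fun_neg hDd hD0]
    apply pd_congr'
    filter_upwards [hUx] with y hy using hs0 y hy
  have hs1i : ∀ i, pd i (fun y => s y 1) x
      = (pd i (pd 0 χ) x * D x - pd 0 χ x * pd i D x) / (D x) ^ 2 := by
    intro i
    rw [← pd_div' i (hpd 0) hDd hD0]
    apply pd_congr'
    filter_upwards [hUx] with y hy using hs1 y hy
  have hDx : D x = P 0 x * pd 0 χ x + P 1 x * pd 1 χ x := by rw [hD]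
  have hwv' : pd 1 (P 1) x = - pd 0 (P 0) x := by linarith
  intro α
  fin_cases α
  · simp only [Fin.sum_univ_two, Fin.zero_eta, hti, hs0i, ht _ x hx, hs0 x hx, hs1 x hx, hDi,
      hsym2, hwv']
    field_simp
    rw [hDx]
    ring
  · simp only [Fin.sum_univ_two, Fin.mk_one, hti, hs1i, ht _ x hx, hs0 x hx, hs1 x hx, hDi,
      hsym2, hwv']
    field_simp
    rw [hDx]
    ring
end

section
/- Let U ⊆ ℝ² be open, connected and simply connected, let h be a C¹ Lorentzian metric on U, and let s : U → ℝ² be a C¹ vector field. Define t : U → ℝ² by t^α := Σ_β ε^{αβ}(h s)_β, where ε^{01} = −1/√(−det h) = −ε^{10}, ε^{00} = ε^{11} = 0. Assume tᵀ h t > 0 on U and that t and s commute: Σ_β (t^β ∂_β s^α − s^β ∂_β t^α) = 0 on U. Then there exists a C² function χ : U → ℝ satisfying □_h χ = 0 and ∂χ² := Σ_{α,β} h^{αβ} ∂_αχ ∂_βχ > 0 on U, such that the lowered components of t satisfy (h t)_α = ∂_αχ / ∂χ² at every point of U. -/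
open Matrix

structure DscR : Type where
  val : ℝ
instance DscR.top : TopologicalSpace DscR := ⊥
instance DscR.disc : DiscreteTopology DscR := ⟨rfl⟩

noncomputable def primCore (U : Set (Fin 2 → ℝ)) (r : U → ℝ) (hr : ∀ x, 0 < r x)
    (f : U → (Fin 2 → ℝ) → ℝ)
    (hf : ∀ i j : U, ∀ y z, y ∈ Metric.ball i.1 (r i) ∩ Metric.ball j.1 (r j) →
      z ∈ Metric.ball i.1 (r i) ∩ Metric.ball j.1 (r j) → f i y - f j y = f i z - f j z) :
    FiberBundleCore U U DscR where
  baseSet i := {y : U | y.1 ∈ Metric.ball i.1 (r i)}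
  isOpen_baseSet i := Metric.isOpen_ball.preimage continuous_subtype_val
  indexAt x := x
  mem_baseSet_at x := Metric.mem_ball_self (hr x)
  coordChange i j x v := ⟨v.val + (f i x - f j x)⟩
  coordChange_self i x _ v := by
    simp
  continuousOn_coordChange i j := by
    rintro ⟨x, v⟩ ⟨hx, -⟩
    have h1 : ContinuousWithinAt (fun p : U × DscR => (⟨p.2.val + (f i x.1 - f j x.1)⟩ : DscR))
      (({y : U | y.1 ∈ Metric.ball i.1 (r i)} ∩ {y : U | y.1 ∈ Metric.ball j.1 (r j)}) ×ˢ Set.univ)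
      (x, v) := by
      have : Continuous (fun p : DscR => (⟨p.val + (f i x.1 - f j x.1)⟩ : DscR)) :=
        continuous_of_discreteTopology
      exact (this.comp continuous_snd).continuousWithinAt
    refine h1.congr ?_ rfl
    rintro ⟨y, w⟩ ⟨hy, -⟩
    show (⟨w.val + (f i y - f j y)⟩ : DscR) = ⟨w.val + (f i x - f j x)⟩
    rw [hf i j y.1 x.1 hy hx]
  coordChange_comp i j k x _ v := by
    show (⟨v.val + (f i x - f j x) + (f j x - f k x)⟩ : DscR) = ⟨v.val + (f i x - f k x)⟩
    congr 1
    ring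

theorem exists_primitive (U : Set (Fin 2 → ℝ)) (hU : IsOpen U) (hsc : SimplyConnectedSpace U)
    (ω : (Fin 2 → ℝ) → (Fin 2 → ℝ) →L[ℝ] ℝ) (hω : DifferentiableOn ℝ ω U)
    (hd : ∀ a ∈ U, ∀ x y, fderiv ℝ ω a x y = fderiv ℝ ω a y x) :
    ∃ χ : (Fin 2 → ℝ) → ℝ, ∀ x ∈ U, HasFDerivAt χ (ω x) x := by
  have hloc : ∀ x : U, ∃ r > 0, Metric.ball x.1 r ⊆ U ∧ ∃ f : (Fin 2 → ℝ) → ℝ,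
      ∀ y ∈ Metric.ball x.1 r, HasFDerivAt f (ω y) y := by
    intro x
    obtain ⟨r, hr, hb⟩ := Metric.isOpen_iff.1 hU x.1 x.2
    exact ⟨r, hr, hb, (convex_ball x.1 r).exists_forall_hasFDerivAt_of_fderiv_symmetric
      Metric.isOpen_ball (hω.mono hb) (fun a ha => hd a (hb ha))⟩
  choose r hr hb f hf using hloc
  have hcst : ∀ i j : U, ∀ y z, y ∈ Metric.ball i.1 (r i) ∩ Metric.ball j.1 (r j) →
      z ∈ Metric.ball i.1 (r i) ∩ Metric.ball j.1 (r j) → f i y - f j y = f i z - f j z := by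
    intro i j y z hy hz
    have hD : ∀ y ∈ Metric.ball i.1 (r i) ∩ Metric.ball j.1 (r j),
        HasFDerivAt (𝕜 := ℝ) (fun y : Fin 2 → ℝ => f i y - f j y) 0 y := by
      intro y hy
      have h0 := (hf i y hy.1).sub (hf j y hy.2)
      rw [sub_self] at h0
      exact h0
    exact (Metric.isOpen_ball.inter Metric.isOpen_ball).is_const_of_fderiv_eq_zero (𝕜 := ℝ)
      ((convex_ball _ _).inter (convex_ball _ _)).isPreconnected
      (fun y hy => (hD y hy).differentiableAt.differentiableWithinAt)
      (fun y hy => (hD y hy).fderiv) hy hz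
  let Z := primCore U r hr f hcst
  have hcov : IsCoveringMap Z.proj :=
    IsFiberBundle.isCoveringMap (F := DscR) fun x => ⟨Z.localTriv x, Z.mem_baseSet_at x⟩
  have := hU.locallyPathConnectedSpace
  obtain ⟨x₀⟩ : Nonempty U := inferInstance
  obtain ⟨F, ⟨-, hF⟩, -⟩ := hcov.existsUnique_continuousMap_lifts (ContinuousMap.id U) x₀
    (⟨x₀, (⟨0⟩ : DscR)⟩ : Z.TotalSpace) rfl
  have hF' : ∀ x : U, (F x).1 = x := fun x => congrFun hF x
  let g : U → ℝ := fun x => DscR.val (F x).2 + f x x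
  classical
  refine ⟨fun x => if hx : x ∈ U then g ⟨x, hx⟩ else 0, fun x hx => ?_⟩
  have hc : ContinuousAt (fun y : U => (Z.localTriv ⟨x, hx⟩ (F y)).2) ⟨x, hx⟩ := by
    have h1 : F ⟨x, hx⟩ ∈ (Z.localTriv ⟨x, hx⟩).source := by
      rw [Z.mem_localTriv_source, hF']
      exact Z.mem_baseSet_at _
    exact continuousAt_snd.comp
      (((Z.localTriv ⟨x, hx⟩).continuousAt h1).comp F.continuous.continuousAt)
  have hev := hc.eventually_mem (show {(Z.localTriv ⟨x, hx⟩ (F ⟨x, hx⟩)).2} ∈ _ from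
    (isOpen_discrete _).mem_nhds rfl)
  set c : DscR := (Z.localTriv ⟨x, hx⟩ (F ⟨x, hx⟩)).2
  have hev2 : ∀ᶠ y in nhds x, ∀ hy : y ∈ U, (Z.localTriv ⟨x, hx⟩ (F ⟨y, hy⟩)).2 = c := by
    rw [nhds_subtype, Filter.eventually_comap] at hev
    filter_upwards [hev] with y hy hyU using hy ⟨y, hyU⟩ rfl
  refine ((hf ⟨x, hx⟩ x (Metric.mem_ball_self (hr _))).const_add c.val).congr_of_eventuallyEq ?_
  filter_upwards [hev2, hU.mem_nhds hx] with y hy hyU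
  have h1 := hy hyU
  rw [Z.localTriv_apply] at h1
  have h2 : DscR.val (F ⟨y, hyU⟩).2 + (f (F ⟨y, hyU⟩).1 (F ⟨y, hyU⟩).1 - f ⟨x, hx⟩ (F ⟨y, hyU⟩).1) = c.val :=
    congrArg DscR.val h1
  rw [hF'] at h2
  simp only [hyU, dif_pos, g]
  linarith

theorem div_zero_of_comm (s t : (Fin 2 → ℝ) → Fin 2 → ℝ) (x : Fin 2 → ℝ)
    (hs : ∀ α, DifferentiableAt ℝ (fun y => s y α) x)
    (ht : ∀ α, DifferentiableAt ℝ (fun y => t y α) x)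
    (hD : s x 0 * t x 1 - s x 1 * t x 0 ≠ 0)
    (hcomm : ∀ α : Fin 2,
      ∑ β, (t x β * pd β (fun y => s y α) x - s x β * pd β (fun y => t y α) x) = 0) :
    pd 0 (fun y => s y 0 / (s y 0 * t y 1 - s y 1 * t y 0)) x +
      pd 1 (fun y => s y 1 / (s y 0 * t y 1 - s y 1 * t y 0)) x = 0 := by
  have h0 := hcomm 0
  have h1 := hcomm 1
  simp only [Fin.sum_univ_two, pd] at h0 h1 ⊢
  have hDd := ((hs 0).hasFDerivAt.mul (ht 1).hasFDerivAt).sub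
    ((hs 1).hasFDerivAt.mul (ht 0).hasFDerivAt)
  have e0 := ((hs 0).hasFDerivAt.mul ((hasDerivAt_inv hD).comp_hasFDerivAt x hDd)).fderiv
  have e1 := ((hs 1).hasFDerivAt.mul ((hasDerivAt_inv hD).comp_hasFDerivAt x hDd)).fderiv
  have f0 : (fun y => s y 0 / (s y 0 * t y 1 - s y 1 * t y 0)) = (fun y => s y 0) *
    ((fun y => y⁻¹) ∘ ((fun y => s y 0) * (fun y => t y 1) - (fun y => s y 1) * fun y => t y 0)) := by
    ext y; simp [div_eq_mul_inv]
  have f1 : (fun y => s y 1 / (s y 0 * t y 1 - s y 1 * t y 0)) = (fun y => s y 1) *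
    ((fun y => y⁻¹) ∘ ((fun y => s y 0) * (fun y => t y 1) - (fun y => s y 1) * fun y => t y 0)) := by
    ext y; simp [div_eq_mul_inv]
  have g0 := e0
  have g1 := e1
  rw [← f0] at g0
  rw [← f1] at g1
  rw [g0, g1]
  simp only [Function.comp, Pi.mul_apply, Pi.sub_apply, ContinuousLinearMap.add_apply,
    ContinuousLinearMap.sub_apply, ContinuousLinearMap.smul_apply, smul_eq_mul]
  set A0 := fderiv ℝ (fun y => s y 0) x (Pi.single 0 1)
  set A1 := fderiv ℝ (fun y => s y 0) x (Pi.single 1 1)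
  set B0 := fderiv ℝ (fun y => s y 1) x (Pi.single 0 1)
  set B1 := fderiv ℝ (fun y => s y 1) x (Pi.single 1 1)
  set P0 := fderiv ℝ (fun y => t y 0) x (Pi.single 0 1)
  set P1 := fderiv ℝ (fun y => t y 0) x (Pi.single 1 1)
  set Q0 := fderiv ℝ (fun y => t y 1) x (Pi.single 0 1)
  set Q1 := fderiv ℝ (fun y => t y 1) x (Pi.single 1 1)
  have key : (A0 + B1) * (s x 0 * t x 1 - s x 1 * t x 0)
      - s x 0 * (s x 0 * Q0 + t x 1 * A0 - (s x 1 * P0 + t x 0 * B0))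
      - s x 1 * (s x 0 * Q1 + t x 1 * A1 - (s x 1 * P1 + t x 0 * B1)) = 0 := by
    linear_combination s x 0 * h1 - s x 1 * h0
  field_simp
  linear_combination key

theorem alg_pt (m : Matrix (Fin 2) (Fin 2) ℝ) (hm : m.IsSymm) (hdet : m.det < 0)
    (s t : Fin 2 → ℝ) (ht : ∀ α, t α = ∑ β, eps m α β * (m.mulVec s) β) :
    m.mulVec t 0 = Real.sqrt (-m.det) * s 1 ∧ m.mulVec t 1 = - (Real.sqrt (-m.det) * s 0) := by
  have hw : 0 < Real.sqrt (-m.det) := Real.sqrt_pos.2 (by linarith)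
  have hw2 := Real.sq_sqrt (show 0 ≤ -m.det by linarith)
  have h10 : m 1 0 = m 0 1 := hm.apply 0 1
  have t0 := ht 0
  have t1 := ht 1
  simp [Fin.sum_univ_two, eps, Matrix.mulVec, dotProduct] at t0 t1
  set w := Real.sqrt (-m.det)
  rw [Matrix.det_fin_two, h10] at hw2
  simp only [Matrix.mulVec, dotProduct, Fin.sum_univ_two, t0, t1, h10]
  constructor
  · field_simp
    linear_combination - s 1 * hw2
  · field_simp
    linear_combination s 0 * hw2

theorem statement4 (U : Set (Fin 2 → ℝ)) (hU : IsOpen U)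
    (hconn : IsConnected U) (hsc : SimplyConnectedSpace U)
    (h : (Fin 2 → ℝ) → Matrix (Fin 2) (Fin 2) ℝ)
    (hsymm : ∀ x ∈ U, (h x).IsSymm) (hdet : ∀ x ∈ U, (h x).det < 0)
    (hC1 : ∀ α β : Fin 2, ContDiffOn ℝ 1 (fun x => h x α β) U)
    (s : (Fin 2 → ℝ) → Fin 2 → ℝ) (hs : ContDiffOn ℝ 1 s U)
    (t : (Fin 2 → ℝ) → Fin 2 → ℝ)
    (htdef : ∀ x α, t x α = ∑ β, eps (h x) α β * ((h x).mulVec (s x)) β)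
    (htpos : ∀ x ∈ U, 0 < t x ⬝ᵥ (h x).mulVec (t x))
    (hcomm : ∀ x ∈ U, ∀ α : Fin 2,
      ∑ β, (t x β * pd β (fun y => s y α) x - s x β * pd β (fun y => t y α) x) = 0) :
    ∃ χ : (Fin 2 → ℝ) → ℝ, ContDiffOn ℝ 2 χ U ∧
      (∀ x ∈ U, waveOp h χ x = 0) ∧
      (∀ x ∈ U, 0 < gradSq h χ x) ∧
      (∀ x ∈ U, ∀ α : Fin 2, ((h x).mulVec (t x)) α = pd α χ x / gradSq h χ x) := by
  have hw : ∀ x ∈ U, 0 < Real.sqrt (-(h x).det) := fun x hx =>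
    Real.sqrt_pos.2 (by linarith [hdet x hx])
  have hsC : ∀ α, ContDiffOn ℝ 1 (fun x => s x α) U := fun α => contDiffOn_pi.1 hs α
  have hwC : ContDiffOn ℝ 1 (fun x => Real.sqrt (-(h x).det)) U := by
    have : ContDiffOn ℝ 1 (fun x => -(h x).det) U := by
      simp only [Matrix.det_fin_two]
      exact (((hC1 0 0).mul (hC1 1 1)).sub ((hC1 0 1).mul (hC1 1 0))).neg
    exact this.sqrt (fun x hx => by linarith [hdet x hx])
  have htC : ∀ α, ContDiffOn ℝ 1 (fun x => t x α) U := by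
    have hm : ∀ β, ContDiffOn ℝ 1 (fun x => (h x).mulVec (s x) β) U := by
      intro β
      simp only [Matrix.mulVec, dotProduct, Fin.sum_univ_two]
      exact ((hC1 β 0).mul (hsC 0)).add ((hC1 β 1).mul (hsC 1))
    have he : ∀ α β, ContDiffOn ℝ 1 (fun x => eps (h x) α β) U := by
      intro α β
      have hz : ContDiffOn ℝ 1 (fun _ : Fin 2 → ℝ => (0 : ℝ)) U := contDiffOn_const
      have h1 : ContDiffOn ℝ 1 (fun x => -1 / Real.sqrt (-(h x).det)) U :=
        contDiffOn_const.div hwC (fun x hx => (hw x hx).ne')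
      have h2 : ContDiffOn ℝ 1 (fun x => 1 / Real.sqrt (-(h x).det)) U :=
        contDiffOn_const.div hwC (fun x hx => (hw x hx).ne')
      fin_cases α <;> fin_cases β
      · exact hz
      · exact h1
      · exact h2
      · exact hz
    intro α
    have : (fun x => t x α) = fun x => ∑ β, eps (h x) α β * ((h x).mulVec (s x)) β := by
      ext x; exact htdef x α
    rw [this]
    exact ContDiffOn.sum fun β _ => (he α β).mul (hm β)
  have hdiff : ∀ {f : (Fin 2 → ℝ) → ℝ}, ContDiffOn ℝ 1 f U → ∀ x ∈ U, DifferentiableAt ℝ f x :=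
    fun hf x hx => (hf.differentiableOn (by simp)).differentiableAt (hU.mem_nhds hx)
  -- pointwise algebra
  have hu := fun x hx => alg_pt (h x) (hsymm x hx) (hdet x hx) (s x) (t x) (htdef x)
  have hT : ∀ x ∈ U, t x ⬝ᵥ (h x).mulVec (t x) =
      Real.sqrt (-(h x).det) * (t x 0 * s x 1 - t x 1 * s x 0) := by
    intro x hx
    rw [dotProduct, Fin.sum_univ_two, (hu x hx).1, (hu x hx).2]
    ring
  have hD : ∀ x ∈ U, 0 < t x 0 * s x 1 - t x 1 * s x 0 := by
    intro x hx
    have := htpos x hx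
    rw [hT x hx] at this
    exact (mul_pos_iff_of_pos_left (hw x hx)).1 this
  have hD' : ∀ x ∈ U, s x 0 * t x 1 - s x 1 * t x 0 ≠ 0 := by
    intro x hx h0
    have := hD x hx
    linarith
  let ω0 : (Fin 2 → ℝ) → ℝ := fun y => -(s y 1 / (s y 0 * t y 1 - s y 1 * t y 0))
  let ω1 : (Fin 2 → ℝ) → ℝ := fun y => s y 0 / (s y 0 * t y 1 - s y 1 * t y 0)
  have hDC : ContDiffOn ℝ 1 (fun y => s y 0 * t y 1 - s y 1 * t y 0) U :=
    ((hsC 0).mul (htC 1)).sub ((hsC 1).mul (htC 0))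
  have hω0 : ContDiffOn ℝ 1 ω0 U := ((hsC 1).div hDC hD').neg
  have hω1 : ContDiffOn ℝ 1 ω1 U := (hsC 0).div hDC hD'
  let π : Fin 2 → (Fin 2 → ℝ) →L[ℝ] ℝ := fun i => ContinuousLinearMap.proj i
  let ω : (Fin 2 → ℝ) → (Fin 2 → ℝ) →L[ℝ] ℝ := fun y => ω0 y • π 0 + ω1 y • π 1
  have hωC : ContDiffOn ℝ 1 ω U := (hω0.smul contDiffOn_const).add (hω1.smul contDiffOn_const)
  have hclosed : ∀ x ∈ U, pd 1 ω0 x = pd 0 ω1 x := by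
    intro x hx
    have h1 := div_zero_of_comm s t x (fun α => hdiff (hsC α) x hx) (fun α => hdiff (htC α) x hx)
      (hD' x hx) (hcomm x hx)
    have h2 : pd 1 ω0 x = - pd 1 (fun y => s y 1 / (s y 0 * t y 1 - s y 1 * t y 0)) x := by
      simp only [pd, ω0]
      rw [fderiv_fun_neg]; rfl
    rw [h2]
    linarith
  obtain ⟨χ, hχ⟩ := exists_primitive U hU hsc ω (hωC.differentiableOn (by simp)) (by
    intro a ha x y
    have d := ((hdiff hω0 a ha).hasFDerivAt.smul_const (π 0)).add
      ((hdiff hω1 a ha).hasFDerivAt.smul_const (π 1))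
    have d' : fderiv ℝ ω a = _ := d.fderiv
    have dec : ∀ (L : (Fin 2 → ℝ) →L[ℝ] ℝ) (v : Fin 2 → ℝ),
        L v = v 0 * L (Pi.single 0 1) + v 1 * L (Pi.single 1 1) := by
      intro L v
      conv_lhs => rw [pi_eq_sum_univ' v]
      simp [Fin.sum_univ_two, map_add, map_smul]
    have hc := hclosed a ha
    simp only [pd] at hc
    rw [d']
    simp only [ContinuousLinearMap.add_apply, ContinuousLinearMap.smulRight_apply,
      ContinuousLinearMap.smul_apply, smul_eq_mul, π, ContinuousLinearMap.proj_apply]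
    rw [dec (fderiv ℝ ω0 a) x, dec (fderiv ℝ ω0 a) y, dec (fderiv ℝ ω1 a) x,
      dec (fderiv ℝ ω1 a) y]
    linear_combination (x 1 * y 0 - y 1 * x 0) * hc)
  have hp0 : ∀ x ∈ U, pd 0 χ x = ω0 x := by
    intro x hx
    simp [pd, (hχ x hx).fderiv, ω, π]
  have hp1 : ∀ x ∈ U, pd 1 χ x = ω1 x := by
    intro x hx
    simp [pd, (hχ x hx).fderiv, ω, π]
  have hlow : ∀ x ∈ U, ∀ α, (h x).mulVec (t x) α = pd α χ x * (t x ⬝ᵥ (h x).mulVec (t x)) := by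
    intro x hx α
    have h1 := hD' x hx
    rw [hT x hx]
    fin_cases α
    · simp only [Fin.zero_eta, Fin.isValue, Fin.mk_one]
      rw [(hu x hx).1, hp0 x hx]
      simp only [ω0]
      field_simp
      ring
    · simp only [Fin.zero_eta, Fin.isValue, Fin.mk_one]
      rw [(hu x hx).2, hp1 x hx]
      simp only [ω1]
      field_simp
      ring
  have hraise : ∀ x ∈ U, ∀ α, ∑ β, (h x)⁻¹ α β * pd β χ x =
      t x α / (t x ⬝ᵥ (h x).mulVec (t x)) := by
    intro x hx α
    have hunit : IsUnit (h x).det := (hdet x hx).ne.isUnit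
    rw [eq_div_iff (htpos x hx).ne', Finset.sum_mul]
    simp_rw [mul_assoc, ← hlow x hx]
    have : (h x)⁻¹.mulVec ((h x).mulVec (t x)) α = t x α := by
      rw [Matrix.mulVec_mulVec, Matrix.nonsing_inv_mul _ hunit, Matrix.one_mulVec]
    exact this
  have hgrad : ∀ x ∈ U, gradSq h χ x = 1 / (t x ⬝ᵥ (h x).mulVec (t x)) := by
    intro x hx
    have h1 : gradSq h χ x = ∑ α, pd α χ x * ∑ β, (h x)⁻¹ α β * pd β χ x := by
      unfold gradSq
      refine Finset.sum_congr rfl fun α _ => ?_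
      rw [Finset.mul_sum]
      exact Finset.sum_congr rfl fun β _ => by ring
    have hne := (htpos x hx).ne'
    have h2 : (t x ⬝ᵥ (h x).mulVec (t x)) =
        (t x 0 * pd 0 χ x + t x 1 * pd 1 χ x) * (t x ⬝ᵥ (h x).mulVec (t x)) := by
      conv_lhs => rw [dotProduct, Fin.sum_univ_two, hlow x hx 0, hlow x hx 1]
      ring
    have h3 : t x 0 * pd 0 χ x + t x 1 * pd 1 χ x = 1 := by
      have := mul_right_cancel₀ hne ((one_mul _).trans h2)
      exact this.symm
    rw [h1, Fin.sum_univ_two, hraise x hx, hraise x hx, ← h3]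
    ring
  refine ⟨χ, ?_, ?_, ?_, ?_⟩
  · rw [show (2 : WithTop ℕ∞) = 1 + 1 by norm_num, contDiffOn_succ_iff_fderiv_of_isOpen hU]
    refine ⟨fun x hx => (hχ x hx).differentiableAt.differentiableWithinAt, by simp, ?_⟩
    exact hωC.congr fun x hx => (hχ x hx).fderiv
  · intro x hx
    have h1 := div_zero_of_comm t s x (fun α => hdiff (htC α) x hx) (fun α => hdiff (hsC α) x hx)
      (hD x hx).ne' (by
        intro α
        have := hcomm x hx α
        simp only [Fin.sum_univ_two] at this ⊢
        linarith)
    have h2 : ∀ α, pd α (fun y => Real.sqrt (-(h y).det) * ∑ β, (h y)⁻¹ α β * pd β χ y) x =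
        pd α (fun y => t y α / (t y 0 * s y 1 - t y 1 * s y 0)) x := by
      intro α
      unfold pd
      have : (fun y => Real.sqrt (-(h y).det) * ∑ β, (h y)⁻¹ α β * pd β χ y) =ᶠ[nhds x]
          (fun y => t y α / (t y 0 * s y 1 - t y 1 * s y 0)) := by
        filter_upwards [hU.mem_nhds hx] with y hy
        have := (hw y hy).ne'
        have := (hD y hy).ne'
        rw [hraise y hy, hT y hy]
        field_simp
      have h3 := this.fderiv_eq (𝕜 := ℝ)
      unfold pd at h3
      rw [h3]
    unfold waveOp
    rw [Fin.sum_univ_two, h2, h2]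
    exact h1
  · intro x hx
    rw [hgrad x hx]
    exact one_div_pos.2 (htpos x hx)
  · intro x hx α
    rw [hgrad x hx, hlow x hx]
    simp
end

section
/- Let η_l, η_r : ℝ → ℝ be C¹ functions with η_l(x) > η_r(x) for all x ∈ ℝ, and suppose there exist constants ε, M with 0 < ε ≤ M < ∞ such that ε ≤ η_l′(x) ≤ M and ε ≤ η_r′(x) ≤ M for all x ∈ ℝ. Then there exist C¹ functions F, G : ℝ → ℝ with F′ > 0 and G′ > 0 everywhere which are surjective onto ℝ (hence C¹ diffeomorphisms of the real line), such that G(η_l(x)) = F(x) and G(η_r(x)) = F(x) − 2π for all x ∈ ℝ. -/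
open Real

def GoodSub : Subgroup (Equiv.Perm ℝ) where
  carrier := {f | ContDiff ℝ 1 f ∧ ∀ x, 0 < deriv f x}
  one_mem' := by
    refine ⟨contDiff_id, fun x => ?_⟩
    have : ((1 : Equiv.Perm ℝ) : ℝ → ℝ) = id := rfl
    rw [this]; simp
  mul_mem' := by
    rintro f g ⟨hf, hf'⟩ ⟨hg, hg'⟩
    refine ⟨hf.comp hg, fun x => ?_⟩
    have : ((f * g : Equiv.Perm ℝ) : ℝ → ℝ) = f ∘ g := rfl
    rw [this, deriv_comp _ (hf.differentiable one_ne_zero _) (hg.differentiable one_ne_zero _)]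
    exact mul_pos (hf' _) (hg' _)
  inv_mem' := by
    rintro f ⟨hf, hf'⟩
    have hm : StrictMono f := strictMono_of_deriv_pos hf'
    let e : ℝ ≃ₜ ℝ := (hm.orderIsoOfSurjective f f.surjective).toHomeomorph
    have he : (e : ℝ → ℝ) = f := rfl
    have hes : (e.symm : ℝ → ℝ) = (f⁻¹ : Equiv.Perm ℝ) := by
      funext y
      apply f.injective
      have h1 : f (e.symm y) = y := e.apply_symm_apply y
      rw [h1]; exact (f.apply_symm_apply y).symm
    have hd : ∀ x, HasDerivAt f (deriv f x) x :=
      fun x => (hf.differentiable one_ne_zero x).hasDerivAt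
    have hc : ContDiff ℝ 1 (f⁻¹ : Equiv.Perm ℝ) := by
      rw [← hes]
      exact e.contDiff_symm_deriv (fun x => (hf' x).ne') hd hf
    refine ⟨hc, fun x => ?_⟩
    have h2 : HasDerivAt (f⁻¹ : Equiv.Perm ℝ) (deriv f ((f⁻¹ : Equiv.Perm ℝ) x))⁻¹ x :=
      (hd _).of_local_left_inverse hc.continuous.continuousAt (hf' _).ne'
        (Filter.Eventually.of_forall fun y => f.apply_symm_apply y)
    rw [h2.deriv]
    exact inv_pos.2 (hf' _)

lemma good_strictMono {f : Equiv.Perm ℝ} (hf : f ∈ GoodSub) : StrictMono f :=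
  strictMono_of_deriv_pos hf.2

lemma zpow_succ_app (f : Equiv.Perm ℝ) (n : ℤ) (x : ℝ) : (f ^ (n+1)) x = f ((f ^ n) x) := by
  rw [add_comm, zpow_add, zpow_one]; rfl

lemma zpow_succ_app' (f : Equiv.Perm ℝ) (n : ℤ) (x : ℝ) : (f ^ (n+1)) x = (f ^ n) (f x) := by
  rw [zpow_add, zpow_one]; rfl

lemma orbit_mono {f : Equiv.Perm ℝ} (hlt : ∀ x, x < f x) (x : ℝ) :
    StrictMono (fun n : ℤ => (f ^ n) x) := by
  apply strictMono_int_of_lt_succ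
  intro n
  rw [zpow_succ_app]; exact hlt _

lemma orbit_above {f : Equiv.Perm ℝ} (hf : f ∈ GoodSub) (hlt : ∀ x, x < f x) (x b : ℝ) :
    ∃ n : ℤ, b < (f ^ n) x := by
  by_contra! hcon
  have hlub := isLUB_csSup (Set.range_nonempty (fun n : ℤ => (f ^ n) x))
    ⟨b, by rintro _ ⟨n, rfl⟩; exact hcon n⟩
  set s := sSup (Set.range (fun n : ℤ => (f ^ n) x))
  have h1 : f.symm s < s := by
    have := hlt (f.symm s); rwa [f.apply_symm_apply] at this
  obtain ⟨_, ⟨n, rfl⟩, hn, -⟩ := hlub.exists_between h1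
  have h2 := good_strictMono hf hn
  rw [f.apply_symm_apply] at h2
  have h3 := hlub.1 ⟨n+1, rfl⟩
  simp only [zpow_succ_app] at h3
  exact absurd h2 (not_lt.2 h3)

lemma orbit_below {f : Equiv.Perm ℝ} (hf : f ∈ GoodSub) (hlt : ∀ x, x < f x) (x b : ℝ) :
    ∃ n : ℤ, (f ^ n) x < b := by
  obtain ⟨n, hn⟩ := orbit_above hf hlt b x
  refine ⟨-n, ?_⟩
  have := good_strictMono (GoodSub.zpow_mem hf (-n)) hn
  rwa [← Equiv.Perm.mul_apply, ← zpow_add, neg_add_cancel, zpow_zero, Equiv.Perm.one_apply] at this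

lemma abel {f : Equiv.Perm ℝ} (hf : f ∈ GoodSub) (hlt : ∀ x, x < f x) :
    ∃ G : ℝ → ℝ, ContDiff ℝ 1 G ∧ (∀ x, 0 < deriv G x) ∧ Function.Surjective G ∧
      ∀ x, G (f x) = G x + 2 * π := by
  have hz : ∀ n : ℤ, f ^ n ∈ GoodSub := fun n => GoodSub.zpow_mem hf n
  let h : ℝ → ℝ := fun x => max 0 (min (x+1) (f 0 + 1 - x))
  have hc : Continuous h := by fun_prop
  have h0 : ∀ x, 0 ≤ h x := fun x => le_max_left _ _
  have hpos : ∀ x, 0 ≤ x → x ≤ f 0 → 0 < h x := fun x h1 h2 =>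
    lt_max_of_lt_right (lt_min (by linarith) (by linarith))
  have hsupp : ∀ x, h x ≠ 0 → -1 ≤ x ∧ x ≤ f 0 + 1 := by
    intro x hx
    by_contra hcon
    apply hx
    apply max_eq_left
    rw [min_le_iff]
    by_contra! h3
    exact hcon ⟨by linarith [h3.1], by linarith [h3.2]⟩
  let k : ℤ → ℝ → ℝ := fun n x => h ((f ^ n) x) * deriv (f ^ n : Equiv.Perm ℝ) x
  have kc : ∀ n, Continuous (k n) := fun n =>
    (hc.comp (hz n).1.continuous).mul ((hz n).1.continuous_deriv le_rfl)
  have k0 : ∀ n x, 0 ≤ k n x := fun n x => mul_nonneg (h0 _) ((hz n).2 x).le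
  have klf : LocallyFinite fun n => Function.support (k n) := by
    intro x
    refine ⟨Set.Ioo (x-1) (x+1), Ioo_mem_nhds (by linarith) (by linarith), ?_⟩
    obtain ⟨N, hN⟩ := orbit_above hf hlt (x-1) (f 0 + 1)
    obtain ⟨m, hm⟩ := orbit_below hf hlt (x+1) (-1)
    apply (Set.finite_Icc m N).subset
    rintro n ⟨y, hy, hy1, hy2⟩
    have hy' := hsupp _ (left_ne_zero_of_mul hy)
    have a1 := good_strictMono (hz n) hy1
    have a2 := good_strictMono (hz n) hy2
    constructor
    · by_contra! hn
      have := orbit_mono hlt (x+1) hn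
      simp only at this
      linarith [hy'.1]
    · by_contra! hn
      have := orbit_mono hlt (x-1) hn
      simp only at this
      linarith [hy'.2]
  have kfin : ∀ x, (Function.support fun n => k n x).Finite := fun x => klf.point_finite x
  let g : ℝ → ℝ := fun x => ∑ᶠ n, k n x
  have gc : Continuous g := continuous_finsum kc klf
  have gpos : ∀ x, 0 < g x := by
    intro x
    obtain ⟨N, hN⟩ := orbit_above hf hlt x (f 0)
    obtain ⟨m, hm⟩ := orbit_below hf hlt x (f 0)
    obtain ⟨n, hn, hn'⟩ := Int.exists_greatest_of_bdd (P := fun n => (f ^ n) x ≤ f 0)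
      ⟨N, fun z hz => (orbit_mono hlt x).le_iff_le.1 (hz.trans hN.le)⟩ ⟨m, hm.le⟩
    have h1 : f 0 < (f ^ (n+1)) x := by
      by_contra! hh
      have := hn' _ hh
      omega
    rw [zpow_succ_app] at h1
    have h2 := (good_strictMono hf).lt_iff_lt.1 h1
    have h3 : 0 < k n x := mul_pos (hpos _ h2.le hn) ((hz n).2 x)
    exact h3.trans_le (single_le_finsum n (kfin x) fun j => k0 j x)
  have ginv : ∀ x, g (f x) * deriv f x = g x := by
    intro x
    change (∑ᶠ n, k n (f x)) * _ = ∑ᶠ n, k n x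
    rw [finsum_mul, ← finsum_comp_equiv (Equiv.addRight (1:ℤ)) (f := fun n => k n x)]
    apply finsum_congr
    intro n
    have e : ((f ^ (n+1) : Equiv.Perm ℝ) : ℝ → ℝ) = (f ^ n : Equiv.Perm ℝ) ∘ f :=
      funext fun y => zpow_succ_app' f n y
    change h ((f ^ n) (f x)) * deriv (f ^ n : Equiv.Perm ℝ) (f x) * deriv f x
      = h ((f ^ (n+1)) x) * deriv (f ^ (n+1) : Equiv.Perm ℝ) x
    rw [e, deriv_comp _ ((hz n).1.differentiable one_ne_zero _)
      (hf.1.differentiable one_ne_zero _), Function.comp_apply]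
    ring
  let G : ℝ → ℝ := fun x => ∫ t in (0:ℝ)..x, g t
  have Gd : ∀ x, HasDerivAt G (g x) x := fun x => gc.integral_hasStrictDerivAt 0 x |>.hasDerivAt
  have Gm : StrictMono G := strictMono_of_deriv_pos fun x => by rw [(Gd x).deriv]; exact gpos x
  have Dd : ∀ x, HasDerivAt (fun x => G (f x) - G x) 0 x := by
    intro x
    have := ((Gd (f x)).comp x (hf.1.differentiable one_ne_zero x).hasDerivAt).sub (Gd x)
    rw [ginv, sub_self] at this
    exact this
  obtain ⟨c, hcdef⟩ : ∃ c, c = G (f 0) - G 0 := ⟨_, rfl⟩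
  have cpos : 0 < c := by rw [hcdef]; exact sub_pos.2 (Gm (hlt 0))
  have Gf : ∀ x, G (f x) = G x + c := by
    intro x
    have := is_const_of_deriv_eq_zero (fun y => (Dd y).differentiableAt) (fun y => (Dd y).deriv) x 0
    linarith
  have Gn : ∀ n : ℤ, G ((f ^ n) 0) = G 0 + n * c := by
    intro n
    induction n using Int.induction_on with
    | zero => simp
    | succ i ih => rw [zpow_succ_app, Gf, ih]; push_cast; ring
    | pred i ih =>
      have e := zpow_succ_app f (-(i:ℤ) - 1) 0
      rw [sub_add_cancel] at e
      rw [e, Gf] at ih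
      push_cast at ih ⊢
      linarith
  have Gcont : Continuous G := continuous_iff_continuousAt.2 fun x => (Gd x).continuousAt
  have Gs : Function.Surjective G := by
    intro y
    obtain ⟨m, hm⟩ := exists_int_lt ((y - G 0) / c)
    obtain ⟨N, hN⟩ := exists_int_gt ((y - G 0) / c)
    rw [lt_div_iff₀ cpos] at hm
    rw [div_lt_iff₀ cpos] at hN
    exact mem_range_of_exists_le_of_exists_ge Gcont ⟨_, by rw [Gn m]; linarith⟩
      ⟨_, by rw [Gn N]; linarith⟩
  have p : 0 < 2 * π / c := by positivity
  have Hd : ∀ x, HasDerivAt (fun x => 2 * π / c * G x) (2 * π / c * g x) x :=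
    fun x => (Gd x).const_mul _
  refine ⟨fun x => 2 * π / c * G x, ?_, ?_, ?_, ?_⟩
  · rw [contDiff_one_iff_deriv]
    refine ⟨fun x => (Hd x).differentiableAt, ?_⟩
    rw [funext fun x => (Hd x).deriv]
    exact continuous_const.mul gc
  · intro x
    rw [(Hd x).deriv]; exact mul_pos p (gpos x)
  · intro y
    obtain ⟨x, hx⟩ := Gs (y / (2 * π / c))
    exact ⟨x, by simp only [hx]; exact mul_div_cancel₀ _ p.ne'⟩
  · intro x
    simp only [Gf]
    field_simp

lemma surj_of_deriv {f : ℝ → ℝ} (hf : ContDiff ℝ 1 f) {ε : ℝ} (hε : 0 < ε)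
    (h : ∀ x, ε ≤ deriv f x) : Function.Surjective f := by
  have hd := hf.differentiable one_ne_zero
  have key : ∀ x y, x ≤ y → ε * (y - x) ≤ f y - f x := fun x y hxy =>
    mul_sub_le_image_sub_of_le_deriv hd h hxy
  intro y
  have hy := abs_nonneg (y - f 0)
  have h1 := le_abs_self (y - f 0)
  have h2 := neg_abs_le (y - f 0)
  have hq : 0 ≤ |y - f 0| / ε := by positivity
  have e : ε * (|y - f 0| / ε) = |y - f 0| := mul_div_cancel₀ _ hε.ne'
  refine mem_range_of_exists_le_of_exists_ge hf.continuous
    ⟨-(|y - f 0| / ε), ?_⟩ ⟨|y - f 0| / ε, ?_⟩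
  · have := key (-(|y - f 0| / ε)) 0 (by linarith)
    rw [zero_sub, neg_neg, e] at this
    linarith
  · have := key 0 _ hq
    rw [sub_zero, e] at this
    linarith

lemma exists_good {f : ℝ → ℝ} (hf : ContDiff ℝ 1 f) {ε : ℝ} (hε : 0 < ε)
    (h : ∀ x, ε ≤ deriv f x) : ∃ e : Equiv.Perm ℝ, e ∈ GoodSub ∧ ∀ x, e x = f x := by
  have hp : ∀ x, 0 < deriv f x := fun x => hε.trans_le (h x)
  exact ⟨Equiv.ofBijective f ⟨(strictMono_of_deriv_pos hp).injective, surj_of_deriv hf hε h⟩,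
    ⟨hf, hp⟩, fun x => rfl⟩

theorem statement8 (ηl ηr : ℝ → ℝ)
    (hl : ContDiff ℝ 1 ηl) (hr : ContDiff ℝ 1 ηr)
    (horder : ∀ x, ηr x < ηl x)
    (ε M : ℝ) (hε : 0 < ε) (hεM : ε ≤ M)
    (hl' : ∀ x, ε ≤ deriv ηl x ∧ deriv ηl x ≤ M)
    (hr' : ∀ x, ε ≤ deriv ηr x ∧ deriv ηr x ≤ M) :
    ∃ F G : ℝ → ℝ, ContDiff ℝ 1 F ∧ ContDiff ℝ 1 G ∧
      (∀ x, 0 < deriv F x) ∧ (∀ x, 0 < deriv G x) ∧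
      Function.Surjective F ∧ Function.Surjective G ∧
      (∀ x, G (ηl x) = F x) ∧ (∀ x, G (ηr x) = F x - 2 * π) := by
  obtain ⟨a, ha, hae⟩ := exists_good hl hε fun x => (hl' x).1
  obtain ⟨b, hb, hbe⟩ := exists_good hr hε fun x => (hr' x).1
  have happ : ∀ x, (a * b⁻¹) (ηr x) = ηl x := by
    intro x
    rw [← hbe, ← hae, Equiv.Perm.mul_apply]
    exact congrArg a (b.symm_apply_apply x)
  have hsr := surj_of_deriv hr hε fun x => (hr' x).1
  have hsl := surj_of_deriv hl hε fun x => (hl' x).1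
  obtain ⟨G, G1, G2, G3, G4⟩ := abel (GoodSub.mul_mem ha (GoodSub.inv_mem hb)) (by
    intro y
    obtain ⟨x, rfl⟩ := hsr y
    rw [happ]; exact horder x)
  refine ⟨G ∘ ηl, G, G1.comp hl, G1, fun x => ?_, G2, G3.comp hsl, G3, fun x => rfl, fun x => ?_⟩
  · rw [deriv_comp _ (G1.differentiable one_ne_zero _) (hl.differentiable one_ne_zero _)]
    exact mul_pos (G2 _) (hε.trans_le (hl' x).1)
  · have := G4 (ηr x)
    rw [happ] at this
    simp only [Function.comp]
    linarith
end

section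
/- Let V ⊆ ℝ² be open, let h be a Lorentzian metric on V, and let t, s : V → ℝ² be vector fields satisfying tᵀ h s = 0, tᵀ h t + sᵀ h s = 0 and tᵀ h t > 0 at every point of V. Let W ⊆ ℝ² be open with coordinates (τ̃, σ̃) and let x : W → V be differentiable with ∂x/∂τ̃ = t(x(τ̃,σ̃)) and ∂x/∂σ̃ = s(x(τ̃,σ̃)) on W. Then the pullback metric h̃(τ̃,σ̃) := (Dx(τ̃,σ̃))ᵀ · h(x(τ̃,σ̃)) · Dx(τ̃,σ̃) is conformally flat: h̃ = e^{2φ} · diag(1,−1), where e^{2φ}(τ̃,σ̃) := t(x(τ̃,σ̃))ᵀ h(x(τ̃,σ̃)) t(x(τ̃,σ̃)) > 0; in particular the Jacobian Dx is invertible at every point of W. -/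
open Matrix

/-- Jacobian matrix of a map `x : ℝ² → ℝ²`: `(jac x p) α β = ∂_β x^α (p)`. -/
noncomputable def jac (x : (Fin 2 → ℝ) → (Fin 2 → ℝ)) (p : Fin 2 → ℝ) :
    Matrix (Fin 2) (Fin 2) ℝ :=
  Matrix.of fun α β => fderiv ℝ x p (Pi.single β 1) α

/-- The two-dimensional Minkowski metric `diag(1,−1)`. -/
noncomputable def eta : Matrix (Fin 2) (Fin 2) ℝ := !![1, 0; 0, -1]

theorem statement11 (V : Set (Fin 2 → ℝ)) (hV : IsOpen V)
    (h : (Fin 2 → ℝ) → Matrix (Fin 2) (Fin 2) ℝ)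
    (hsymm : ∀ v ∈ V, (h v).IsSymm) (hdet : ∀ v ∈ V, (h v).det < 0)
    (t s : (Fin 2 → ℝ) → Fin 2 → ℝ)
    (horth : ∀ v ∈ V, t v ⬝ᵥ (h v).mulVec (s v) = 0)
    (hnull : ∀ v ∈ V, t v ⬝ᵥ (h v).mulVec (t v) + s v ⬝ᵥ (h v).mulVec (s v) = 0)
    (hpos : ∀ v ∈ V, 0 < t v ⬝ᵥ (h v).mulVec (t v))
    (W : Set (Fin 2 → ℝ)) (hW : IsOpen W)
    (x : (Fin 2 → ℝ) → (Fin 2 → ℝ)) (hxV : Set.MapsTo x W V)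
    (hxdiff : DifferentiableOn ℝ x W)
    (hode : ∀ p ∈ W, fderiv ℝ x p (Pi.single 0 1) = t (x p) ∧
                     fderiv ℝ x p (Pi.single 1 1) = s (x p)) :
    ∀ p ∈ W,
      (jac x p)ᵀ * h (x p) * jac x p = (t (x p) ⬝ᵥ (h (x p)).mulVec (t (x p))) • eta ∧
      0 < t (x p) ⬝ᵥ (h (x p)).mulVec (t (x p)) ∧
      (jac x p).det ≠ 0 := by
  intro p hp
  have hv := hxV hp
  obtain ⟨h0, h1⟩ := hode p hp
  have hs : h (x p) 1 0 = h (x p) 0 1 := (hsymm _ hv).apply 0 1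
  have ho := horth _ hv
  have hn := hnull _ hv
  have hq := hpos _ hv
  have hmain : (jac x p)ᵀ * h (x p) * jac x p
      = (t (x p) ⬝ᵥ (h (x p)).mulVec (t (x p))) • eta := by
    simp only [dotProduct, Matrix.mulVec, Fin.sum_univ_two] at ho hn hq ⊢
    ext i j
    fin_cases i <;> fin_cases j <;>
      simp [jac, eta, Matrix.mul_apply, Fin.sum_univ_two, h0, h1, hs] <;>
      rw [hs] at ho hn <;> linarith
  refine ⟨hmain, hq, fun hd => ?_⟩
  generalize t (x p) ⬝ᵥ (h (x p)).mulVec (t (x p)) = c at hmain hq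
  have h2 := congrArg Matrix.det hmain
  rw [Matrix.det_mul, hd, mul_zero, Matrix.det_smul] at h2
  simp [eta, Matrix.det_fin_two] at h2
  exact hq.ne' h2
end
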